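/- Let p ∈ (1,∞) and θ_p = 2 arcsin(2√(p−1)/p). Then there exists C_p ∈ (0,∞) such that for every n,d ∈ ℕ with 1 ≤ d ≤ n and every function f : {-1,1}^n → ℂ of degree at most d: if p ∈ (1,2), then ‖∇f‖_{L_p} ≤ C_p · d^{(2/p) − θ_p/(pπ)} · log(d+1) · ‖f‖_{L_p}; and if p ∈ [2,∞), then ‖∇f‖_{L_p} ≤ C_p · d^{1 − θ_p/(2π)} · ‖f‖_{L_p}. -/

import Mathlib

open scoped BigOperators ENNReal NNReal

noncomputable section

namespace HammingCube

variable {X : Type*} [NormedAddCommGroup X] [NormedSpace ℂ X]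

/-- The sign ±1 associated to a boolean coordinate. -/
def sgn (b : Bool) : ℝ := if b then 1 else -1

/-- The Walsh function `w_A(ε) = ∏_{i ∈ A} ε_i`. -/
def walsh {n : ℕ} (A : Finset (Fin n)) (ε : Fin n → Bool) : ℝ := ∏ i ∈ A, sgn (ε i)

/-- The Fourier–Walsh coefficient `f̂(A) = 2⁻ⁿ ∑_δ f(δ) w_A(δ)`. -/
def coeff {n : ℕ} (f : (Fin n → Bool) → X) (A : Finset (Fin n)) : X :=
  (2 ^ n : ℝ)⁻¹ • ∑ δ : Fin n → Bool, walsh A δ • f δ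

/-- `f` has degree at most `d`: `f̂(A) = 0` whenever `|A| > d`. -/
def degLE {n : ℕ} (f : (Fin n → Bool) → X) (d : ℕ) : Prop :=
  ∀ A : Finset (Fin n), d < A.card → coeff f A = 0

/-- `f` belongs to the `d`-th tail space: `f̂(A) = 0` whenever `|A| < d`. -/
def tailSpace {n : ℕ} (f : (Fin n → Bool) → X) (d : ℕ) : Prop :=
  ∀ A : Finset (Fin n), A.card < d → coeff f A = 0

/-- The heat semigroup `e^{-tΔ} f = ∑_A e^{-t|A|} f̂(A) w_A`. -/
def heat {n : ℕ} (t : ℝ) (f : (Fin n → Bool) → X) : (Fin n → Bool) → X :=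
  fun ε => ∑ A : Finset (Fin n), Real.exp (-t * A.card) • walsh A ε • coeff f A

/-- The hypercube Laplacian `Δ f = ∑_A |A| f̂(A) w_A`. -/
def lap {n : ℕ} (f : (Fin n → Bool) → X) : (Fin n → Bool) → X :=
  fun ε => ∑ A : Finset (Fin n), (A.card : ℝ) • walsh A ε • coeff f A

/-- The fractional Laplacian `Δ^γ f = ∑_A |A|^γ f̂(A) w_A`. -/
def fracLap {n : ℕ} (γ : ℝ) (f : (Fin n → Bool) → X) : (Fin n → Bool) → X :=
  fun ε => ∑ A : Finset (Fin n), ((A.card : ℝ) ^ γ) • walsh A ε • coeff f A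

/-- The `i`-th discrete partial derivative. -/
def pderiv {n : ℕ} (i : Fin n) (f : (Fin n → Bool) → X) : (Fin n → Bool) → X :=
  fun ε => (2 : ℝ)⁻¹ • (f ε - f (Function.update ε i (!(ε i))))

/-- The vector-valued `L_p` norm `(2⁻ⁿ ∑_ε ‖f(ε)‖^p)^{1/p}` for finite `p`. -/
def lpNorm {n : ℕ} {Y : Type*} [NormedAddCommGroup Y] (p : ℝ)
    (f : (Fin n → Bool) → Y) : ℝ :=
  ((2 ^ n : ℝ)⁻¹ * ∑ ε : Fin n → Bool, ‖f ε‖ ^ p) ^ (1 / p)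

/-- The `L_∞` norm `max_ε ‖f(ε)‖`. -/
def linfNorm {n : ℕ} {Y : Type*} [NormedAddCommGroup Y]
    (f : (Fin n → Bool) → Y) : ℝ :=
  ⨆ ε : Fin n → Bool, ‖f ε‖

/-- The `L_p` norm for `p ∈ [1,∞]` encoded as `p : ℝ≥0∞`. -/
def lpNormE {n : ℕ} {Y : Type*} [NormedAddCommGroup Y] (p : ℝ≥0∞)
    (f : (Fin n → Bool) → Y) : ℝ :=
  if p = ⊤ then linfNorm f else lpNorm p.toReal f

/-- The scalar `L_p` norm of the gradient `‖(∑_i |∂_i f|²)^{1/2}‖_{L_p}`. -/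
def gradLpNorm {n : ℕ} (p : ℝ) (f : (Fin n → Bool) → ℂ) : ℝ :=
  lpNorm p (fun ε => Real.sqrt (∑ i : Fin n, ‖pderiv i f ε‖ ^ 2))

/-- The Rademacher projection `Rad f(ε) = ∑_i f̂({i}) ε_i`. -/
def Rad {n : ℕ} (f : (Fin n → Bool) → X) : (Fin n → Bool) → X :=
  fun ε => ∑ i : Fin n, sgn (ε i) • coeff f {i}

/-- A complex Banach space is `K`-convex if the Rademacher projections are uniformly
bounded on `L_q` for some `q ∈ (1,∞)`. -/
def KConvex (X : Type*) [NormedAddCommGroup X] [NormedSpace ℂ X] : Prop :=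
  ∃ q : ℝ, 1 < q ∧ ∃ M : ℝ, ∀ (n : ℕ) (f : (Fin n → Bool) → X),
    lpNorm q (Rad f) ≤ M * lpNorm q f

/-- `X` has cotype `q` with constant `C`. -/
def HasCotype (X : Type*) [NormedAddCommGroup X] [NormedSpace ℂ X] (q C : ℝ) : Prop :=
  ∀ (n : ℕ) (x : Fin n → X),
    C⁻¹ * (∑ i : Fin n, ‖x i‖ ^ q) ^ (1 / q) ≤
      ((2 ^ n : ℝ)⁻¹ * ∑ ε : Fin n → Bool, ‖∑ i : Fin n, sgn (ε i) • x i‖ ^ q) ^ (1 / q)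

/-- The entropy `Ent(h)` of a nonnegative function on the cube. -/
def entropy {n : ℕ} (h : (Fin n → Bool) → ℝ) : ℝ :=
  (2 ^ n : ℝ)⁻¹ * ∑ ε : Fin n → Bool, h ε * Real.log (h ε) -
    ((2 ^ n : ℝ)⁻¹ * ∑ ε : Fin n → Bool, h ε) *
      Real.log ((2 ^ n : ℝ)⁻¹ * ∑ ε : Fin n → Bool, h ε)

/-- The `L_∞` norm of the gradient `max_ε (∑_i |∂_i f(ε)|²)^{1/2}`. -/
def gradLinfNorm {n : ℕ} (f : (Fin n → Bool) → ℂ) : ℝ :=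
  ⨆ ε : Fin n → Bool, Real.sqrt (∑ i : Fin n, ‖pderiv i f ε‖ ^ 2)

/-!
The heat semigroup at complex time `w` is `noise (exp (-w))`. Since
`Re (w (a - b) conj (J a - J b)) ≥ 0` for the duality map `J` of exponent `p` as soon as `w` lies
in a sector of half-angle `arcsin (2 √(p - 1) / p) = θ / 2` around the positive axis, the semigroup
is contractive on `L_p` along that sector, and also for every `w` whose real part is large enough.
By the Bernstein-Walsh inequality the latter bounds it on the unit disc by `exp (O(d))` for
functions of degree at most `d`. With `α = 2 - θ / π`, the map `z ↦ -z ^ α` sends the imaginary axis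
to the boundary of the sector and a positive number `r` to the negative time `-r ^ α`, so the
maximum principle on the right half-disc, with the multiplier `exp (-L (2 z - z ^ 2))` for some
`L = O(d)`, bounds the flow at the point `z = d⁻¹` by `exp (O(1))`: it can be run backwards for time
`d ^ (-α)` at a bounded cost.

On the other hand, `noise a` has an explicit kernel whose score is a sum of independent centred
variables. An exponential moment bound for the score and Hölder's inequality give
`‖∇ (noise a f)‖_p ≲ (1 - a) ^ (-1 / min p 2) ‖f‖_p`. Running the flow backwards and then forwards
for time `d ^ (-α)` yields the exponent `α / min p 2`.
-/

lemma sinh_mul_le_mul_sinh {l y : ℝ} (hl0 : 0 ≤ l) (hl1 : l ≤ 1) (hy : 0 ≤ y) :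
    Real.sinh (l * y) ≤ l * Real.sinh y := by
  have hderiv (x : ℝ) : HasDerivAt (fun x => l * Real.sinh x - Real.sinh (l * x))
      (l * Real.cosh x - Real.cosh (l * x) * (l * 1)) x :=
    ((Real.hasDerivAt_sinh x).const_mul l).sub (((hasDerivAt_id x).const_mul l).sinh)
  have hmono : MonotoneOn (fun x => l * Real.sinh x - Real.sinh (l * x)) (Set.Ici 0) := by
    refine monotoneOn_of_deriv_nonneg (convex_Ici 0) (by fun_prop) (by fun_prop) fun x _ => ?_
    have hcosh : Real.cosh (l * x) ≤ Real.cosh x := by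
      rw [Real.cosh_le_cosh, abs_mul, abs_of_nonneg hl0]
      exact mul_le_of_le_one_left (abs_nonneg x) hl1
    rw [(hderiv x).deriv, mul_one, mul_comm _ l]
    exact sub_nonneg.2 (mul_le_mul_of_nonneg_left hcosh hl0)
  simpa using hmono Set.self_mem_Ici hy hy

lemma exp_sub_exp_eq_two_mul_exp_mul_sinh (a b : ℝ) :
    Real.exp a - Real.exp b = 2 * Real.exp ((a + b) / 2) * Real.sinh ((a - b) / 2) := by
  rw [Real.sinh_eq, show ∀ x y z : ℝ, 2 * x * ((y - z) / 2) = x * y - x * z by intros; ring,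
    ← Real.exp_add, ← Real.exp_add]
  congr 2 <;> ring

/- With `r = exp u` and `s = exp v` both differences factor through `exp (p * (u + v) / 2)`, and
the inequality becomes `sinh (l * y) ≤ l * sinh y` for `l = |p - 2| / p` and
`y = p * |u - v| / 2`. -/
lemma mul_abs_rpow_sub_one_mul_sub_le_of_pos {p r s : ℝ} (hp : 1 ≤ p) (hr : 0 < r) (hs : 0 < s) :
    p * |r ^ (p - 1) * s - s ^ (p - 1) * r| ≤ |p - 2| * |r ^ p - s ^ p| := by
  have hp0 : 0 < p := by linarith
  obtain ⟨u, rfl⟩ : ∃ u, Real.exp u = r := ⟨_, Real.exp_log hr⟩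
  obtain ⟨v, rfl⟩ : ∃ v, Real.exp v = s := ⟨_, Real.exp_log hs⟩
  have hl : |p - 2| / p ≤ 1 := by
    rw [div_le_one hp0, abs_le]
    constructor <;> linarith
  have hleft : |(u * (p - 1) + v - (v * (p - 1) + u)) / 2| = |p - 2| / p * (p * |u - v| / 2) := by
    rw [show (u * (p - 1) + v - (v * (p - 1) + u)) / 2 = (p - 2) * ((u - v) / 2) by ring, abs_mul,
      abs_div, abs_two]
    field_simp
  have hright : |(u * p - v * p) / 2| = p * |u - v| / 2 := by
    rw [← sub_mul, abs_div, abs_mul, abs_two, abs_of_pos hp0, mul_comm]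
  have hsinh := sinh_mul_le_mul_sinh (by positivity) hl
    (show 0 ≤ p * |u - v| / 2 by positivity)
  simp only [← Real.exp_mul, ← Real.exp_add, exp_sub_exp_eq_two_mul_exp_mul_sinh, abs_mul,
    Real.abs_sinh, abs_two, Real.abs_exp, hleft, hright]
  rw [show (u * (p - 1) + v + (v * (p - 1) + u)) / 2 = (u * p + v * p) / 2 by ring]
  set E := 2 * Real.exp ((u * p + v * p) / 2)
  calc p * (E * Real.sinh (|p - 2| / p * (p * |u - v| / 2)))
      ≤ p * (E * (|p - 2| / p * Real.sinh (p * |u - v| / 2))) := by gcongr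
    _ = |p - 2| * (E * Real.sinh (p * |u - v| / 2)) := by field_simp

lemma mul_abs_rpow_sub_one_mul_sub_le {p r s : ℝ} (hp : 1 < p) (hr : 0 ≤ r) (hs : 0 ≤ s) :
    p * |r ^ (p - 1) * s - s ^ (p - 1) * r| ≤ |p - 2| * |r ^ p - s ^ p| := by
  have hp1 : p - 1 ≠ 0 := by linarith
  have hzero (x : ℝ) : p * |0 ^ (p - 1) * x - x ^ (p - 1) * 0| ≤ |p - 2| * |0 ^ p - x ^ p| := by
    rw [Real.zero_rpow hp1, zero_mul, mul_zero, sub_zero, abs_zero, mul_zero]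
    positivity
  rcases hr.eq_or_lt with rfl | hr
  · exact hzero s
  rcases hs.eq_or_lt with rfl | hs
  · rw [abs_sub_comm, abs_sub_comm (r ^ p)]
    exact hzero r
  exact mul_abs_rpow_sub_one_mul_sub_le_of_pos hp.le hr hs

/-- The (unnormalised) duality map `a ↦ |a|^(p-2) a` of `L_p`: the gradient of `|a|^p` is
`p` times its value at `a`. -/
def dualityMap (p : ℝ) (a : ℂ) : ℂ := ‖a‖ ^ (p - 2) • a

lemma re_sub_mul_conj_dualityMap_sub (p : ℝ) (a b : ℂ) :
    ((a - b) * starRingEnd ℂ (dualityMap p a - dualityMap p b)).re =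
      ‖a‖ ^ (p - 2) * ‖a‖ ^ 2 + ‖b‖ ^ (p - 2) * ‖b‖ ^ 2
        - (‖a‖ ^ (p - 2) + ‖b‖ ^ (p - 2)) * (a * starRingEnd ℂ b).re := by
  simp only [dualityMap, Complex.sq_norm, Complex.normSq_apply, Complex.mul_re, Complex.sub_re,
    Complex.sub_im, Complex.conj_re, Complex.conj_im, Complex.smul_re, Complex.smul_im,
    smul_eq_mul]
  ring

lemma im_sub_mul_conj_dualityMap_sub (p : ℝ) (a b : ℂ) :
    ((a - b) * starRingEnd ℂ (dualityMap p a - dualityMap p b)).im =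
      (‖a‖ ^ (p - 2) - ‖b‖ ^ (p - 2)) * (a * starRingEnd ℂ b).im := by
  simp only [dualityMap, Complex.mul_im, Complex.sub_re, Complex.sub_im, Complex.conj_re,
    Complex.conj_im, Complex.smul_re, Complex.smul_im, smul_eq_mul]
  ring

lemma rpow_sub_two_mul_self {p r : ℝ} (hp : 1 < p) (hr : 0 ≤ r) :
    r ^ (p - 2) * r = r ^ (p - 1) := by
  rw [← Real.rpow_add_one' hr (by linarith)]
  ring_nf

lemma rpow_sub_two_mul_sq {p r : ℝ} (hp : 0 < p) (hr : 0 ≤ r) :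
    r ^ (p - 2) * r ^ 2 = r ^ p := by
  rw [← Real.rpow_natCast, ← Real.rpow_add' hr] <;> norm_num
  exact hp.ne'

lemma re_sub_mul_conj_dualityMap_sub_nonneg {p : ℝ} (hp : 1 < p) (a b : ℂ) :
    0 ≤ ((a - b) * starRingEnd ℂ (dualityMap p a - dualityMap p b)).re := by
  set r := ‖a‖
  set s := ‖b‖
  have hX : (a * starRingEnd ℂ b).re ≤ r * s := by
    simpa using Complex.re_le_norm (a * starRingEnd ℂ b)
  have hmono : 0 ≤ (r ^ (p - 2) * r - s ^ (p - 2) * s) * (r - s) := by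
    rw [rpow_sub_two_mul_self hp (norm_nonneg a), rpow_sub_two_mul_self hp (norm_nonneg b)]
    rcases le_total s r with h | h
    · exact mul_nonneg (sub_nonneg.2 (Real.rpow_le_rpow (norm_nonneg b) h (by linarith)))
        (sub_nonneg.2 h)
    · exact mul_nonneg_of_nonpos_of_nonpos
        (sub_nonpos.2 (Real.rpow_le_rpow (norm_nonneg a) h (by linarith))) (sub_nonpos.2 h)
  rw [re_sub_mul_conj_dualityMap_sub]
  linarith [mul_le_mul_of_nonneg_left hX
    (show 0 ≤ r ^ (p - 2) + s ^ (p - 2) by positivity)]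

/- Cauchy–Schwarz for the vectors `(X, |Y|)` and `(|p - 2| (A + B), 2 √(p - 1) |A - B|)`; the
length of the second one is controlled by `h` because `4 (p - 1) = p² - (p - 2)²`. -/
lemma two_mul_sqrt_mul_abs_sub_mul_abs_le {p A B r s X Y : ℝ} (hp : 1 ≤ p) (hA : 0 ≤ A)
    (hB : 0 ≤ B) (hXY : X ^ 2 + Y ^ 2 = (r * s) ^ 2)
    (h : p * |A * r * s - B * s * r| ≤ |p - 2| * |A * r ^ 2 - B * s ^ 2|) :
    2 * √(p - 1) * (|A - B| * |Y|) ≤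
      |p - 2| * (A * r ^ 2 + B * s ^ 2 - (A + B) * X) := by
  have hsq : p ^ 2 * ((r * s) ^ 2 * (A - B) ^ 2) ≤
      (p - 2) ^ 2 * (A * r ^ 2 - B * s ^ 2) ^ 2 := by
    have h' := pow_le_pow_left₀ (by positivity) h 2
    rw [mul_pow, mul_pow, sq_abs, sq_abs, sq_abs] at h'
    linarith
  have hsqrt : √(p - 1) ^ 2 = p - 1 := Real.sq_sqrt (by linarith)
  have hCS : (X * (|p - 2| * (A + B)) + |Y| * (2 * √(p - 1) * |A - B|)) ^ 2 ≤
      (|p - 2| * (A * r ^ 2 + B * s ^ 2)) ^ 2 := by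
    calc _ ≤ (X ^ 2 + |Y| ^ 2) * ((|p - 2| * (A + B)) ^ 2 + (2 * √(p - 1) * |A - B|) ^ 2) := by
          linarith [sq_nonneg (X * (2 * √(p - 1) * |A - B|) - |Y| * (|p - 2| * (A + B)))]
      _ = (r * s) ^ 2 * ((p - 2) ^ 2 * (A + B) ^ 2 + 4 * (p - 1) * (A - B) ^ 2) := by
          simp only [sq_abs, hXY, mul_pow, hsqrt]
          ring
      _ ≤ (p - 2) ^ 2 * (A * r ^ 2 + B * s ^ 2) ^ 2 := by linarith
      _ = _ := by rw [mul_pow, sq_abs]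
  linarith [le_of_sq_le_sq hCS (by positivity)]

lemma two_mul_sqrt_mul_abs_im_sub_mul_conj_dualityMap_sub_le {p : ℝ} (hp : 1 < p) (a b : ℂ) :
    2 * √(p - 1) * |((a - b) * starRingEnd ℂ (dualityMap p a - dualityMap p b)).im| ≤
      |p - 2| * ((a - b) * starRingEnd ℂ (dualityMap p a - dualityMap p b)).re := by
  have hp0 : 0 < p := by linarith
  have hXY : (a * starRingEnd ℂ b).re ^ 2 + (a * starRingEnd ℂ b).im ^ 2 = (‖a‖ * ‖b‖) ^ 2 := by
    rw [← Complex.norm_conj b, ← norm_mul, Complex.sq_norm, Complex.normSq_apply]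
    ring
  rw [re_sub_mul_conj_dualityMap_sub, im_sub_mul_conj_dualityMap_sub, abs_mul]
  refine two_mul_sqrt_mul_abs_sub_mul_abs_le hp.le (by positivity) (by positivity) hXY ?_
  simp only [rpow_sub_two_mul_self hp (norm_nonneg _), rpow_sub_two_mul_sq hp0 (norm_nonneg _)]
  exact mul_abs_rpow_sub_one_mul_sub_le hp (norm_nonneg a) (norm_nonneg b)

/-- The sector of those times `w` for which `e^{-wΔ}` is a contraction of `L_p`. It is
`{w | |arg w| ≤ arcsin (2 √(p - 1) / p)}`, written so that it is visibly convex and closed. -/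
def contractionSector (p : ℝ) : Set ℂ := {w | |p - 2| * |w.im| ≤ 2 * √(p - 1) * w.re}

lemma re_mul_sub_mul_conj_dualityMap_sub_nonneg {p : ℝ} (hp : 1 < p) {w : ℂ}
    (hw : w ∈ contractionSector p) (a b : ℂ) :
    0 ≤ (w * ((a - b) * starRingEnd ℂ (dualityMap p a - dualityMap p b))).re := by
  have hre := re_sub_mul_conj_dualityMap_sub_nonneg hp a b
  have him := two_mul_sqrt_mul_abs_im_sub_mul_conj_dualityMap_sub_le hp a b
  generalize (a - b) * starRingEnd ℂ (dualityMap p a - dualityMap p b) = Z at *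
  have hw : |p - 2| * |w.im| ≤ 2 * √(p - 1) * w.re := hw
  have hc : 0 < 2 * √(p - 1) := by
    have := Real.sqrt_pos.2 (sub_pos.2 hp)
    positivity
  have hprod : 2 * √(p - 1) * (|w.im| * |Z.im|) ≤ 2 * √(p - 1) * (w.re * Z.re) := by
    calc _ = |w.im| * (2 * √(p - 1) * |Z.im|) := by ring
      _ ≤ |w.im| * (|p - 2| * Z.re) := by gcongr
      _ = |p - 2| * |w.im| * Z.re := by ring
      _ ≤ 2 * √(p - 1) * w.re * Z.re := by gcongr
      _ = _ := by ring
  rw [Complex.mul_re, sub_nonneg]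
  calc w.im * Z.im ≤ |w.im| * |Z.im| := (le_abs_self _).trans (abs_mul _ _).le
    _ ≤ w.re * Z.re := le_of_mul_le_mul_left hprod hc

lemma sin_arcsin_two_mul_sqrt_sub_one_div {p : ℝ} (hp : 1 ≤ p) :
    Real.sin (Real.arcsin (2 * √(p - 1) / p)) = 2 * √(p - 1) / p := by
  have hsqrt : √(p - 1) ^ 2 = p - 1 := Real.sq_sqrt (by linarith)
  refine Real.sin_arcsin ?_ ?_
  · linarith [show 0 ≤ 2 * √(p - 1) / p by positivity]
  · rw [div_le_one (by linarith)]
    linarith [sq_nonneg (√(p - 1) - 1)]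

lemma cos_arcsin_two_mul_sqrt_sub_one_div {p : ℝ} (hp : 1 ≤ p) :
    Real.cos (Real.arcsin (2 * √(p - 1) / p)) = |p - 2| / p := by
  have hp0 : 0 < p := by linarith
  have hsq : 1 - (2 * √(p - 1) / p) ^ 2 = ((p - 2) / p) ^ 2 := by
    rw [div_pow, mul_pow, Real.sq_sqrt (by linarith)]
    field_simp
    ring
  rw [Real.cos_arcsin, hsq, Real.sqrt_sq_eq_abs, abs_div, abs_of_pos hp0]

lemma mul_exp_mul_I_mem_contractionSector {p r φ : ℝ} (hp : 1 ≤ p) (hr : 0 ≤ r)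
    (hφ : |φ| = Real.arcsin (2 * √(p - 1) / p)) :
    (r * Complex.exp (φ * Complex.I) : ℂ) ∈ contractionSector p := by
  have hsin := sin_arcsin_two_mul_sqrt_sub_one_div hp
  have hcos := cos_arcsin_two_mul_sqrt_sub_one_div hp
  have hcosφ : Real.cos φ = |p - 2| / p := by rw [← Real.cos_abs, hφ, hcos]
  have hsinφ : |Real.sin φ| = 2 * √(p - 1) / p := by
    rw [Real.abs_sin_eq_sqrt_one_sub_cos_sq, ← Real.cos_abs, hφ,
      ← Real.abs_sin_eq_sqrt_one_sub_cos_sq, hsin, abs_of_nonneg (by positivity)]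
  rw [contractionSector, Set.mem_ofPred_eq, Complex.re_ofReal_mul, Complex.im_ofReal_mul,
    Complex.exp_ofReal_mul_I_re, Complex.exp_ofReal_mul_I_im, abs_mul, abs_of_nonneg hr, hcosφ,
    hsinφ]
  exact le_of_eq (by ring)

lemma mem_contractionSector_of_le_re {p : ℝ} (hp : 1 < p) {w : ℂ} (him : |w.im| ≤ Real.pi)
    (hre : |p - 2| * Real.pi / (2 * √(p - 1)) ≤ w.re) : w ∈ contractionSector p := by
  have hc : 0 < 2 * √(p - 1) := by
    have := Real.sqrt_pos.2 (sub_pos.2 hp)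
    positivity
  rw [div_le_iff₀' hc] at hre
  exact (mul_le_mul_of_nonneg_left him (abs_nonneg _)).trans hre

section Walsh

variable {n : ℕ}

/-- The discrete cube point `x` with its `i`-th sign reversed, as used in `pderiv`. -/
def flipAt (i : Fin n) (x : Fin n → Bool) : Fin n → Bool := Function.update x i (!(x i))

lemma flipAt_involutive (i : Fin n) : Function.Involutive (flipAt i) := fun x => by
  simp [flipAt]

lemma sum_flipAt {Y : Type*} [AddCommMonoid Y] (i : Fin n) (h : (Fin n → Bool) → Y) :
    ∑ x, h (flipAt i x) = ∑ x, h x :=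
  Equiv.sum_comp ((flipAt_involutive i).toPerm) h

lemma pderiv_eq_smul_sub_flipAt (i : Fin n) (f : (Fin n → Bool) → X) (x : Fin n → Bool) :
    pderiv i f x = (2 : ℝ)⁻¹ • (f x - f (flipAt i x)) := rfl

lemma pderiv_flipAt (i : Fin n) (f : (Fin n → Bool) → X) (x : Fin n → Bool) :
    pderiv i f (flipAt i x) = -pderiv i f x := by
  simp only [pderiv_eq_smul_sub_flipAt, flipAt_involutive i x, ← smul_neg, neg_sub]

lemma sgn_mul_self (b : Bool) : sgn b * sgn b = 1 := by cases b <;> norm_num [sgn]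

lemma sgn_not (b : Bool) : sgn (!b) = -sgn b := by cases b <;> norm_num [sgn]

lemma sgn_mul_sgn_of_ne {a b : Bool} (h : a ≠ b) : sgn a * sgn b = -1 := by
  revert h
  cases a <;> cases b <;> norm_num [sgn]

lemma walsh_eq_prod_ite (A : Finset (Fin n)) (x : Fin n → Bool) :
    walsh A x = ∏ i, if i ∈ A then sgn (x i) else 1 := by
  rw [walsh, Finset.prod_ite_mem, Finset.univ_inter]

lemma walsh_flipAt (A : Finset (Fin n)) (i : Fin n) (x : Fin n → Bool) :
    walsh A (flipAt i x) = if i ∈ A then -walsh A x else walsh A x := by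
  have hne {j : Fin n} (h : j ≠ i) : flipAt i x j = x j := Function.update_of_ne h _ x
  have hself : flipAt i x i = !(x i) := Function.update_self i _ x
  unfold walsh
  split_ifs with hi
  · rw [← Finset.mul_prod_erase A _ hi, ← Finset.mul_prod_erase A _ hi, hself, sgn_not, neg_mul]
    congr 2
    exact Finset.prod_congr rfl fun j hj => by rw [hne (Finset.ne_of_mem_erase hj)]
  · exact Finset.prod_congr rfl fun j hj => by rw [hne fun h => hi (h ▸ hj)]

lemma sum_walsh_mul_walsh (A B : Finset (Fin n)) :
    ∑ x, walsh A x * walsh B x = if A = B then 2 ^ n else 0 := by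
  simp only [walsh_eq_prod_ite, ← Finset.prod_mul_distrib]
  rw [← Fintype.prod_sum fun (i : Fin n) (b : Bool) =>
    (if i ∈ A then sgn b else 1) * (if i ∈ B then sgn b else 1)]
  simp only [Fintype.sum_bool]
  split_ifs with h
  · subst h
    rw [← Fin.prod_const]
    refine Finset.prod_congr rfl fun i _ => ?_
    split_ifs <;> norm_num [sgn]
  · obtain ⟨i, hi⟩ : ∃ i, ¬(i ∈ A ↔ i ∈ B) := by
      contrapose! h
      exact Finset.ext h
    refine Finset.prod_eq_zero (Finset.mem_univ i) ?_
    by_cases hA : i ∈ A <;> by_cases hB : i ∈ B <;> simp_all [sgn]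

lemma coeff_sum_walsh_smul (c : Finset (Fin n) → X) (A : Finset (Fin n)) :
    coeff (fun x => ∑ B, walsh B x • c B) A = c A := by
  have hinner (B : Finset (Fin n)) :
      ∑ x, walsh A x • walsh B x • c B = if A = B then (2 ^ n : ℝ) • c B else 0 := by
    simp only [smul_smul, ← Finset.sum_smul, sum_walsh_mul_walsh, ite_smul, zero_smul]
  simp only [coeff, Finset.smul_sum (r := walsh A _)]
  rw [Finset.sum_comm]
  simp only [hinner, Finset.sum_ite_eq, Finset.mem_univ, if_true]
  rw [smul_smul, inv_mul_cancel₀ (by positivity), one_smul]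

/-- The noise operator `z^Δ f = ∑_A z^|A| f̂(A) w_A`; the heat semigroup at the complex time `w`
is `noise (exp (-w))`. -/
def noise (z : ℂ) (f : (Fin n → Bool) → X) : (Fin n → Bool) → X :=
  fun x => ∑ A : Finset (Fin n), z ^ A.card • walsh A x • coeff f A

lemma coeff_noise (z : ℂ) (f : (Fin n → Bool) → X) (A : Finset (Fin n)) :
    coeff (noise z f) A = z ^ A.card • coeff f A := by
  have h : noise z f = fun x => ∑ B, walsh B x • z ^ B.card • coeff f B :=
    funext fun x => Finset.sum_congr rfl fun B _ => smul_comm ..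
  rw [h, coeff_sum_walsh_smul]

lemma noise_noise (z w : ℂ) (f : (Fin n → Bool) → X) :
    noise z (noise w f) = noise (z * w) f := by
  funext x
  refine Finset.sum_congr rfl fun A _ => ?_
  rw [coeff_noise, smul_comm (walsh A x), mul_pow, mul_smul]

/-- The kernel of the noise operator: for `0 ≤ a ≤ 1`, the law of the point `y` obtained from `x`
by independently keeping each sign with probability `(1 + a) / 2`. -/
def noiseKernel (a : ℝ) (x y : Fin n → Bool) : ℝ := ∏ i, (1 + a * (sgn (x i) * sgn (y i))) / 2

lemma noiseKernel_eq_sum_walsh (a : ℝ) (x y : Fin n → Bool) :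
    noiseKernel a x y =
      ∑ A : Finset (Fin n), (2 ^ n)⁻¹ * (a ^ A.card * (walsh A x * walsh A y)) := by
  rw [noiseKernel, Finset.prod_div_distrib, Finset.prod_one_add, Finset.powerset_univ,
    Fin.prod_const, div_eq_inv_mul, Finset.mul_sum]
  simp only [Finset.prod_mul_distrib, Finset.prod_const, walsh]

lemma noise_ofReal_apply (a : ℝ) (f : (Fin n → Bool) → X) (x : Fin n → Bool) :
    noise (a : ℂ) f x = ∑ y, noiseKernel a x y • f y := by
  simp only [noiseKernel_eq_sum_walsh, Finset.sum_smul]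
  rw [Finset.sum_comm]
  refine Finset.sum_congr rfl fun A _ => ?_
  rw [← Complex.ofReal_pow, Complex.coe_smul, coeff]
  simp only [Finset.smul_sum, smul_smul]
  refine Finset.sum_congr rfl fun y _ => ?_
  congr 1
  ring

lemma noise_one (f : (Fin n → Bool) → X) : noise 1 f = f := by
  have hself (x : Fin n → Bool) : noiseKernel 1 x x = 1 := by
    simp only [noiseKernel, sgn_mul_self]
    norm_num
  have hne {x y : Fin n → Bool} (h : y ≠ x) : noiseKernel 1 x y = 0 := by
    obtain ⟨i, hi⟩ := Function.ne_iff.1 h.symm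
    refine Finset.prod_eq_zero (Finset.mem_univ i) ?_
    rw [sgn_mul_sgn_of_ne hi]
    norm_num
  funext x
  rw [← Complex.ofReal_one, noise_ofReal_apply, Finset.sum_eq_single x
    (fun y _ h => by rw [hne h, zero_smul]) (fun h => (h (Finset.mem_univ x)).elim), hself,
    one_smul]

lemma pderiv_eq_sum_walsh (i : Fin n) (f : (Fin n → Bool) → X) (x : Fin n → Bool) :
    pderiv i f x = ∑ A, if i ∈ A then walsh A x • coeff f A else 0 := by
  conv_lhs => rw [← noise_one f, pderiv_eq_smul_sub_flipAt]
  simp only [noise, one_pow, one_smul, ← Finset.sum_sub_distrib, ← sub_smul, walsh_flipAt,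
    Finset.smul_sum]
  refine Finset.sum_congr rfl fun A _ => ?_
  split_ifs
  · rw [sub_neg_eq_add, ← two_mul, mul_smul, smul_smul, inv_mul_cancel₀ two_ne_zero, one_smul]
  · rw [sub_self, zero_smul, smul_zero]

lemma sum_pderiv (f : (Fin n → Bool) → X) (x : Fin n → Bool) :
    ∑ i, pderiv i f x = lap f x := by
  simp only [pderiv_eq_sum_walsh, lap]
  rw [Finset.sum_comm]
  refine Finset.sum_congr rfl fun A _ => ?_
  rw [Finset.sum_ite_mem, Finset.univ_inter, Finset.sum_const, Nat.cast_smul_eq_nsmul]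

lemma sum_pderiv_mul (i : Fin n) (f g : (Fin n → Bool) → ℂ) :
    ∑ x, pderiv i f x * g x = ∑ x, pderiv i f x * pderiv i g x := by
  have hflip : ∑ x, pderiv i f x * g (flipAt i x) = -∑ x, pderiv i f x * g x := by
    rw [← sum_flipAt i, ← Finset.sum_neg_distrib]
    simp only [pderiv_flipAt, flipAt_involutive i _, neg_mul]
  simp only [pderiv_eq_smul_sub_flipAt i g, mul_smul_comm, mul_sub, ← Finset.smul_sum,
    Finset.sum_sub_distrib, hflip]
  rw [sub_neg_eq_add, ← two_smul ℝ, smul_smul, inv_mul_cancel₀ two_ne_zero, one_smul]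

lemma sum_lap_mul (f g : (Fin n → Bool) → ℂ) :
    ∑ x, lap f x * g x = ∑ i, ∑ x, pderiv i f x * pderiv i g x := by
  simp only [← sum_pderiv_mul, ← sum_pderiv, Finset.sum_mul]
  exact Finset.sum_comm

lemma hasDerivAt_noise_exp (f : (Fin n → Bool) → X) (w : ℂ) (x : Fin n → Bool) (s : ℝ) :
    HasDerivAt (fun s : ℝ => noise (Complex.exp (-(s * w))) f x)
      (-(w • lap (noise (Complex.exp (-(s * w))) f) x)) s := by
  have hterm (k : ℕ) : HasDerivAt (fun s : ℝ => Complex.exp (-(s * w)) ^ k)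
      (-w * (k * Complex.exp (-(s * w)) ^ k)) s := by
    simp only [← Complex.exp_nat_mul]
    have h : HasDerivAt (fun s : ℝ => (k : ℂ) * -(s * w)) (k * -(1 * w)) s :=
      (((Complex.ofRealCLM.hasDerivAt (x := s)).mul_const w).neg).const_mul (k : ℂ)
    exact h.cexp.congr_deriv (by ring)
  refine (HasDerivAt.fun_sum fun (A : Finset (Fin n)) _ =>
    (hterm A.card).smul_const (walsh A x • coeff f A)).congr_deriv ?_
  rw [lap, ← neg_smul, Finset.smul_sum]
  refine Finset.sum_congr rfl fun A _ => ?_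
  rw [coeff_noise, smul_comm (walsh A x), smul_comm (A.card : ℝ), mul_smul, mul_smul,
    smul_comm (A.card : ℂ), ← Complex.ofReal_natCast, Complex.coe_smul]

end Walsh

section Contraction

variable {n : ℕ} {p : ℝ}

lemma re_sum_mul_lap_mul_conj_dualityMap_nonneg (hp : 1 < p) {w : ℂ}
    (hw : w ∈ contractionSector p) (g : (Fin n → Bool) → ℂ) :
    0 ≤ (∑ x, w * (lap g x * starRingEnd ℂ (dualityMap p (g x)))).re := by
  have hpair (i : Fin n) (x : Fin n → Bool) :
      w * (pderiv i g x * pderiv i (fun x => starRingEnd ℂ (dualityMap p (g x))) x) =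
        (4⁻¹ : ℝ) * (w * ((g x - g (flipAt i x)) *
          starRingEnd ℂ (dualityMap p (g x) - dualityMap p (g (flipAt i x))))) := by
    simp only [pderiv_eq_smul_sub_flipAt, Complex.real_smul, map_sub]
    push_cast
    ring
  rw [← Finset.mul_sum, sum_lap_mul, Finset.mul_sum, Complex.re_sum]
  refine Finset.sum_nonneg fun i _ => ?_
  rw [Finset.mul_sum, Complex.re_sum]
  refine Finset.sum_nonneg fun x _ => ?_
  rw [hpair, Complex.re_ofReal_mul]
  exact mul_nonneg (by norm_num) (re_mul_sub_mul_conj_dualityMap_sub_nonneg hp hw _ _)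

lemma hasDerivAt_norm_rpow_comp (hp : 1 < p) {u : ℝ → ℂ} {u' : ℂ} {s : ℝ}
    (hu : HasDerivAt u u' s) :
    HasDerivAt (fun s => ‖u s‖ ^ p) (p * (u' * starRingEnd ℂ (dualityMap p (u s))).re) s := by
  refine ((hasFDerivAt_norm_rpow (u s) hp).comp_hasDerivAt s hu).congr_deriv ?_
  rw [smul_apply, innerSL_apply_apply, Complex.inner, smul_eq_mul, dualityMap,
    Complex.real_smul, map_mul, Complex.conj_ofReal, mul_left_comm, Complex.re_ofReal_mul,
    mul_assoc]

theorem sum_norm_noise_exp_rpow_le (hp : 1 < p) {w : ℂ} (hw : w ∈ contractionSector p)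
    (f : (Fin n → Bool) → ℂ) :
    ∑ x, ‖noise (Complex.exp (-w)) f x‖ ^ p ≤ ∑ x, ‖f x‖ ^ p := by
  have hderiv (s : ℝ) := HasDerivAt.fun_sum (u := Finset.univ) fun x _ =>
    hasDerivAt_norm_rpow_comp hp (hasDerivAt_noise_exp f w x s)
  have hanti : Antitone fun s : ℝ => ∑ x, ‖noise (Complex.exp (-(s * w))) f x‖ ^ p := by
    refine antitone_of_deriv_nonpos (fun s => (hderiv s).differentiableAt) fun s => ?_
    have henergy := re_sum_mul_lap_mul_conj_dualityMap_nonneg hp hw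
      (noise (Complex.exp (-(s * w))) f)
    rw [(hderiv s).deriv, ← Finset.mul_sum, ← Complex.re_sum]
    simp only [neg_mul, smul_eq_mul, mul_assoc, Finset.sum_neg_distrib, Complex.neg_re]
    nlinarith
  simpa [noise_one] using hanti zero_le_one

end Contraction

section LpNorm

variable {n : ℕ} {p : ℝ}

lemma lpNorm_nonneg {Y : Type*} [NormedAddCommGroup Y] (p : ℝ) (f : (Fin n → Bool) → Y) :
    0 ≤ lpNorm p f := by
  unfold lpNorm
  positivity

lemma lpNorm_eq_mul_norm_toLp (hp : 0 < p) (f : (Fin n → Bool) → ℂ) :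
    lpNorm p f = ((2 ^ n : ℝ)⁻¹) ^ (1 / p) * ‖WithLp.toLp (ENNReal.ofReal p) f‖ := by
  have h : (ENNReal.ofReal p).toReal = p := ENNReal.toReal_ofReal hp.le
  rw [PiLp.norm_eq_sum (h.symm ▸ hp), h, lpNorm, Real.mul_rpow (by positivity) (by positivity)]

lemma lpNorm_le_mul_lpNorm_iff (hp : 0 < p) {f g : (Fin n → Bool) → ℂ} {c : ℝ} :
    lpNorm p f ≤ c * lpNorm p g ↔
      ‖WithLp.toLp (ENNReal.ofReal p) f‖ ≤ c * ‖WithLp.toLp (ENNReal.ofReal p) g‖ := by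
  have hpos : 0 < ((2 ^ n : ℝ)⁻¹) ^ (1 / p) := by positivity
  rw [lpNorm_eq_mul_norm_toLp hp, lpNorm_eq_mul_norm_toLp hp, mul_left_comm,
    mul_le_mul_iff_right₀ hpos]

lemma norm_toLp_noise_exp_le (hp : 1 < p) {w : ℂ} (hw : w ∈ contractionSector p)
    (f : (Fin n → Bool) → ℂ) :
    ‖WithLp.toLp (ENNReal.ofReal p) (noise (Complex.exp (-w)) f)‖ ≤
      ‖WithLp.toLp (ENNReal.ofReal p) f‖ := by
  have hp0 : 0 < p := by linarith
  have h : (ENNReal.ofReal p).toReal = p := ENNReal.toReal_ofReal hp0.le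
  rw [PiLp.norm_eq_sum (h.symm ▸ hp0), PiLp.norm_eq_sum (h.symm ▸ hp0), h]
  exact Real.rpow_le_rpow (by positivity) (sum_norm_noise_exp_rpow_le hp hw f) (by positivity)

lemma toLp_noise (q : ℝ≥0∞) (z : ℂ) (f : (Fin n → Bool) → ℂ) :
    WithLp.toLp q (noise z f) =
      ∑ A : Finset (Fin n), z ^ A.card • WithLp.toLp q (fun x => walsh A x • coeff f A) := by
  ext x
  simp [noise]

end LpNorm

section HalfDisc

lemma exists_neg_cpow_eq_norm_rpow_mul_exp {α : ℝ} (hα0 : 0 < α) (hα2 : α ≤ 2) {z : ℂ}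
    (hz : z.re = 0) :
    ∃ φ : ℝ, |φ| = Real.pi - α * Real.pi / 2 ∧
      -(z ^ (α : ℂ)) = (‖z‖ ^ α : ℝ) * Complex.exp (φ * Complex.I) := by
  have hpi := Real.pi_pos
  have hφ : 0 ≤ Real.pi - α * Real.pi / 2 := by nlinarith
  rcases lt_trichotomy z.im 0 with him | him | him
  · refine ⟨Real.pi - α * Real.pi / 2, abs_of_nonneg hφ, ?_⟩
    rw [Complex.cpow_ofReal, Complex.arg_eq_neg_pi_div_two_iff.2 ⟨hz, him⟩, Complex.ofReal_cos,
      Complex.ofReal_sin, ← Complex.exp_mul_I, ← mul_neg, ← mul_neg_one, ← Complex.exp_pi_mul_I,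
      ← Complex.exp_add]
    push_cast
    ring_nf
  · rw [show z = 0 from Complex.ext hz him, norm_zero, Real.zero_rpow hα0.ne',
      Complex.zero_cpow (Complex.ofReal_ne_zero.2 hα0.ne')]
    exact ⟨_, abs_of_nonneg hφ, by simp⟩
  · refine ⟨-(Real.pi - α * Real.pi / 2), by rw [abs_neg, abs_of_nonneg hφ], ?_⟩
    rw [Complex.cpow_ofReal, Complex.arg_eq_pi_div_two_iff.2 ⟨hz, him⟩, Complex.ofReal_cos,
      Complex.ofReal_sin, ← Complex.exp_mul_I, ← mul_neg, ← mul_neg_one,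
      ← Complex.exp_neg_pi_mul_I, ← Complex.exp_add]
    push_cast
    ring_nf

lemma norm_exp_neg_mul_two_mul_sub_sq (L : ℝ) (z : ℂ) :
    ‖Complex.exp (-(L * (2 * z - z ^ 2)))‖ =
      Real.exp (-(L * (2 * z.re - z.re ^ 2 + z.im ^ 2))) := by
  rw [Complex.norm_exp, Complex.neg_re, Complex.re_ofReal_mul, pow_two, Complex.sub_re,
    Complex.mul_re, Complex.mul_re, Complex.re_ofNat, Complex.im_ofNat]
  ring_nf

variable {E : Type*} [NormedAddCommGroup E] [NormedSpace ℂ E]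

lemma norm_exp_smul_le_of_re_eq_zero {L M : ℝ} (hL : 0 ≤ L) {z : ℂ} (hz : z.re = 0) {v : E}
    (hv : ‖v‖ ≤ M) : ‖Complex.exp (-(L * (2 * z - z ^ 2))) • v‖ ≤ M := by
  rw [norm_smul, norm_exp_neg_mul_two_mul_sub_sq, hz]
  refine (mul_le_of_le_one_left (norm_nonneg v) (Real.exp_le_one_iff.2 ?_)).trans hv
  linarith [mul_nonneg hL (sq_nonneg z.im)]

lemma norm_exp_smul_le_of_norm_eq_one {L M : ℝ} (hL : 0 ≤ L) {z : ℂ} (hre : 0 ≤ z.re)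
    (hz : ‖z‖ = 1) {v : E} (hv : ‖v‖ ≤ M * Real.exp L) :
    ‖Complex.exp (-(L * (2 * z - z ^ 2))) • v‖ ≤ M := by
  have hsq : z.re * z.re + z.im * z.im = 1 := by
    rw [← Complex.normSq_apply, ← Complex.sq_norm, hz, one_pow]
  have hre1 : z.re ≤ 1 := hz ▸ Complex.re_le_norm z
  have hexp : L ≤ L * (2 * z.re - z.re ^ 2 + z.im ^ 2) :=
    le_mul_of_one_le_right hL (by nlinarith)
  rw [norm_smul, norm_exp_neg_mul_two_mul_sub_sq]
  calc _ ≤ Real.exp (-L) * (M * Real.exp L) := by gcongr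
    _ = M := by rw [mul_left_comm, ← Real.exp_add, neg_add_cancel, Real.exp_zero, mul_one]

/- The maximum principle for `exp (-L (2 z - z²)) • F z`: the real part `2 x - x² + y²` of
`2 z - z²` is nonnegative on the diameter, at least `1` on the arc, and only `2 x - x²` at `x`. -/
theorem norm_le_mul_exp_of_diffContOnCl_halfDisc {F : ℂ → E}
    (hF : DiffContOnCl ℂ F ({z | 0 < z.re} ∩ Metric.ball 0 1)) {L M x : ℝ} (hL : 0 ≤ L)
    (hdiameter : ∀ z : ℂ, z.re = 0 → ‖z‖ ≤ 1 → ‖F z‖ ≤ M)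
    (harc : ∀ z : ℂ, 0 ≤ z.re → ‖z‖ = 1 → ‖F z‖ ≤ M * Real.exp L) (hx0 : 0 < x) (hx1 : x ≤ 1) :
    ‖F x‖ ≤ M * Real.exp (2 * L * x) := by
  set G : ℂ → E := fun z => Complex.exp (-(L * (2 * z - z ^ 2))) • F z
  have hG : DiffContOnCl ℂ G ({z | 0 < z.re} ∩ Metric.ball 0 1) :=
    (show Differentiable ℂ fun z : ℂ => Complex.exp (-(L * (2 * z - z ^ 2))) by
      fun_prop).diffContOnCl.smul hF
  have hGarc (z : ℂ) (hre : 0 ≤ z.re) (hz : ‖z‖ = 1) : ‖G z‖ ≤ M :=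
    norm_exp_smul_le_of_norm_eq_one hL hre hz (harc z hre hz)
  have hfrontier : ∀ z ∈ frontier ({z : ℂ | 0 < z.re} ∩ Metric.ball 0 1), ‖G z‖ ≤ M := by
    intro z hz
    have h := frontier_inter_subset _ _ hz
    rw [Complex.frontier_setOfPred_lt_re, Complex.closure_setOfPred_lt_re,
      frontier_ball _ one_ne_zero, closure_ball _ one_ne_zero] at h
    rcases h with ⟨hre, hz⟩ | ⟨hre, hz⟩
    · rw [mem_closedBall_zero_iff] at hz
      exact norm_exp_smul_le_of_re_eq_zero hL hre (hdiameter z hre hz)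
    · exact hGarc z hre (by simpa using hz)
  have hGx : ‖G x‖ ≤ M := by
    rcases hx1.eq_or_lt with rfl | hx1
    · exact hGarc _ (by simp) (by simp)
    · exact Complex.norm_le_of_forall_mem_frontier_norm_le
        (Metric.isBounded_ball.subset Set.inter_subset_right) hG hfrontier
        (subset_closure ⟨by simpa using hx0, by simpa [abs_of_pos hx0] using hx1⟩)
  rw [norm_smul, norm_exp_neg_mul_two_mul_sub_sq, Complex.ofReal_re, Complex.ofReal_im,
    Real.exp_neg, inv_mul_le_iff₀ (Real.exp_pos _), mul_comm] at hGx
  refine hGx.trans (mul_le_mul_of_nonneg_left (Real.exp_le_exp.2 ?_)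
    ((norm_nonneg _).trans (hdiameter 0 rfl (by simp))))
  linarith [mul_nonneg hL (sq_nonneg x)]

/- The branch `z ↦ -z ^ α` maps the right half-plane onto the complement of the sector
`|arg w| ≤ π - α π / 2`. -/
theorem norm_neg_rpow_le_of_norm_ray_le {Q : ℂ → E} (hQ : Differentiable ℂ Q) {α L M x : ℝ}
    (hα0 : 0 < α) (hα2 : α ≤ 2) (hL : 0 ≤ L)
    (hray : ∀ r φ : ℝ, 0 ≤ r → |φ| = Real.pi - α * Real.pi / 2 →
      ‖Q (r * Complex.exp (φ * Complex.I))‖ ≤ M)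
    (hdisc : ∀ w, ‖w‖ ≤ 1 → ‖Q w‖ ≤ M * Real.exp L) (hx0 : 0 < x) (hx1 : x ≤ 1) :
    ‖Q (-(x ^ α : ℝ))‖ ≤ M * Real.exp (2 * L * x) := by
  have hcont {z : ℂ} (hz : 0 ≤ z.re) : ContinuousAt (fun z => Q (-(z ^ (α : ℂ)))) z :=
    hQ.continuous.continuousAt.comp'
      (Complex.continuousAt_cpow_const_of_re_pos (Or.inl hz) (by simpa using hα0)).neg
  have hdiff {z : ℂ} (hz : 0 < z.re) : DifferentiableAt ℂ (fun z => Q (-(z ^ (α : ℂ)))) z :=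
    (hQ _).fun_comp' z (differentiableAt_id.cpow_const (Or.inl hz)).neg
  have hF : DiffContOnCl ℂ (fun z => Q (-(z ^ (α : ℂ)))) ({z | 0 < z.re} ∩ Metric.ball 0 1) := by
    refine ⟨fun z hz => (hdiff hz.1).differentiableWithinAt,
      fun z hz => (hcont ?_).continuousWithinAt⟩
    have h := closure_mono Set.inter_subset_left hz
    rwa [Complex.closure_setOfPred_lt_re] at h
  rw [Complex.ofReal_cpow hx0.le]
  refine norm_le_mul_exp_of_diffContOnCl_halfDisc hF hL (fun z hz _ => ?_)
    (fun z _ hz => ?_) hx0 hx1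
  · obtain ⟨φ, hφ, h⟩ := exists_neg_cpow_eq_norm_rpow_mul_exp hα0 hα2 hz
    exact h ▸ hray _ φ (by positivity) hφ
  · exact hdisc _ (by rw [norm_neg, Complex.norm_cpow_real, hz, Real.one_rpow])

end HalfDisc

section BernsteinWalsh

variable {ι E : Type*} [Fintype ι] [NormedAddCommGroup E] [NormedSpace ℂ E]

/- Bernstein–Walsh: the maximum principle for the reversed polynomial `z ^ d • P z⁻¹` on the disc
of radius `ρ⁻¹`. -/
theorem norm_sum_pow_smul_le {deg : ι → ℕ} {v : ι → E} {d : ℕ} (hv : ∀ i, d < deg i → v i = 0)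
    {ρ M : ℝ} (hρ : 0 < ρ) (hM : ∀ z : ℂ, ‖z‖ = ρ → ‖∑ i, z ^ deg i • v i‖ ≤ M)
    {z : ℂ} (hz : ρ ≤ ‖z‖) :
    ‖∑ i, z ^ deg i • v i‖ ≤ M * (‖z‖ / ρ) ^ d := by
  set F : ℂ → E := fun z => ∑ i, z ^ (d - deg i) • v i
  have hF {z : ℂ} (hz : z ≠ 0) : ‖F z⁻¹‖ * ‖z‖ ^ d = ‖∑ i, z ^ deg i • v i‖ := by
    rw [mul_comm, ← norm_pow, ← norm_smul, Finset.smul_sum]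
    congr 1
    refine Finset.sum_congr rfl fun i _ => ?_
    rcases le_or_gt (deg i) d with hi | hi
    · rw [smul_smul, inv_pow, ← pow_sub₀ z hz (Nat.sub_le _ _), Nat.sub_sub_self hi]
    · rw [hv i hi, smul_zero, smul_zero, smul_zero]
  have hz0 : z ≠ 0 := norm_pos_iff.1 (hρ.trans_le hz)
  have hfrontier : ∀ ζ ∈ frontier (Metric.ball (0 : ℂ) ρ⁻¹), ‖F ζ‖ ≤ M / ρ ^ d := fun ζ hζ => by
    have hζ : ‖ζ⁻¹‖ = ρ := by
      rw [frontier_ball _ (inv_pos.2 hρ).ne', mem_sphere_zero_iff_norm] at hζ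
      rw [norm_inv, hζ, inv_inv]
    have h := hF (norm_pos_iff.1 (hζ.symm ▸ hρ))
    rw [inv_inv, hζ] at h
    rw [le_div_iff₀ (by positivity), h]
    exact hM _ hζ
  have hmax := Complex.norm_le_of_forall_mem_frontier_norm_le Metric.isBounded_ball
    (show Differentiable ℂ F by fun_prop).diffContOnCl hfrontier (z := z⁻¹) (by
      rw [closure_ball _ (inv_pos.2 hρ).ne', mem_closedBall_zero_iff, norm_inv]
      exact inv_anti₀ hρ hz)
  calc ‖∑ i, z ^ deg i • v i‖ = ‖F z⁻¹‖ * ‖z‖ ^ d := (hF hz0).symm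
    _ ≤ M / ρ ^ d * ‖z‖ ^ d := by gcongr
    _ = M * (‖z‖ / ρ) ^ d := by rw [div_pow]; ring

end BernsteinWalsh

section InverseHeat

variable {n d : ℕ} {p L : ℝ}

lemma norm_toLp_noise_le_of_norm_eq_exp_neg (hp : 1 < p)
    (hL : |p - 2| * Real.pi / (2 * √(p - 1)) ≤ L) {z : ℂ} (hz : ‖z‖ = Real.exp (-L))
    (f : (Fin n → Bool) → ℂ) :
    ‖WithLp.toLp (ENNReal.ofReal p) (noise z f)‖ ≤ ‖WithLp.toLp (ENNReal.ofReal p) f‖ := by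
  have hz0 : z ≠ 0 := norm_pos_iff.1 (hz ▸ Real.exp_pos _)
  have hre : (-Complex.log z).re = L := by
    rw [Complex.neg_re, Complex.log_re, hz, Real.log_exp, neg_neg]
  have him : |(-Complex.log z).im| ≤ Real.pi := by
    rw [Complex.neg_im, abs_neg, Complex.log_im]
    exact Complex.abs_arg_le_pi z
  have h := norm_toLp_noise_exp_le hp (mem_contractionSector_of_le_re hp him (hre.symm ▸ hL)) f
  rwa [neg_neg, Complex.exp_log hz0] at h

lemma norm_toLp_noise_exp_le_of_norm_le_one (hp : 1 < p)
    (hL : |p - 2| * Real.pi / (2 * √(p - 1)) ≤ L) (hL1 : 1 ≤ L) {f : (Fin n → Bool) → ℂ}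
    (hf : degLE f d) {w : ℂ} (hw : ‖w‖ ≤ 1) :
    ‖WithLp.toLp (ENNReal.ofReal p) (noise (Complex.exp (-w)) f)‖ ≤
      ‖WithLp.toLp (ENNReal.ofReal p) f‖ * Real.exp (d * (1 + L)) := by
  have : Fact (1 ≤ ENNReal.ofReal p) := ⟨ENNReal.one_le_ofReal.2 hp.le⟩
  have hre : ‖Complex.exp (-w)‖ = Real.exp (-w.re) := Complex.norm_exp _
  obtain ⟨hre1, hre2⟩ := abs_le.1 ((Complex.abs_re_le_norm w).trans hw)
  have hv (A : Finset (Fin n)) (hA : d < A.card) :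
      WithLp.toLp (ENNReal.ofReal p) (fun x => walsh A x • coeff f A) = 0 := by
    simp only [hf A hA, smul_zero]
    rfl
  have hgrowth := norm_sum_pow_smul_le hv (Real.exp_pos (-L))
    (fun z hz => toLp_noise _ z f ▸ norm_toLp_noise_le_of_norm_eq_exp_neg hp hL hz f)
    (z := Complex.exp (-w)) (hre ▸ Real.exp_le_exp.2 (by linarith))
  rw [← toLp_noise, hre, ← Real.exp_sub, ← Real.exp_nat_mul] at hgrowth
  refine hgrowth.trans ?_
  gcongr
  linarith

lemma pos_of_pi_sub_mul_pi_div_two_eq_arcsin {α t : ℝ}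
    (hα : Real.pi - α * Real.pi / 2 = Real.arcsin t) : 0 < α := by
  nlinarith [Real.arcsin_le_pi_div_two t, Real.pi_pos]

/- The complex-time semigroup is contractive on the rays bounding `contractionSector p` and at
most `exp (d (1 + L))` on the unit disc, so it can be run backwards for the time `d ^ (-α)`. -/
theorem lpNorm_noise_exp_rpow_le (hp : 1 < p) (hL : |p - 2| * Real.pi / (2 * √(p - 1)) ≤ L)
    (hL1 : 1 ≤ L) {α : ℝ} (hα : Real.pi - α * Real.pi / 2 = Real.arcsin (2 * √(p - 1) / p))
    (hd : 1 ≤ d) {f : (Fin n → Bool) → ℂ} (hf : degLE f d) :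
    lpNorm p (noise (Real.exp ((d : ℝ)⁻¹ ^ α) : ℝ) f) ≤ Real.exp (2 * (1 + L)) * lpNorm p f := by
  have : Fact (1 ≤ ENNReal.ofReal p) := ⟨ENNReal.one_le_ofReal.2 hp.le⟩
  have hd1 : (1 : ℝ) ≤ d := by exact_mod_cast hd
  have harcsin : 0 ≤ Real.arcsin (2 * √(p - 1) / p) := by
    rw [Real.arcsin_nonneg]
    positivity
  have hα0 : 0 < α := pos_of_pi_sub_mul_pi_div_two_eq_arcsin hα
  have hα2 : α ≤ 2 := by nlinarith [Real.pi_pos]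
  have hQ : Differentiable ℂ fun w : ℂ =>
      WithLp.toLp (ENNReal.ofReal p) (noise (Complex.exp (-w)) f) := by
    simp only [toLp_noise]
    fun_prop
  have h := norm_neg_rpow_le_of_norm_ray_le hQ hα0 hα2 (by positivity : 0 ≤ d * (1 + L))
    (fun r φ hr hφ => norm_toLp_noise_exp_le hp
      (mul_exp_mul_I_mem_contractionSector hp.le hr (hφ.trans hα)) f)
    (fun w hw => norm_toLp_noise_exp_le_of_norm_le_one hp hL hL1 hf hw)
    (inv_pos.2 (by positivity)) (inv_le_one_of_one_le₀ hd1)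
  rw [neg_neg, ← Complex.ofReal_exp] at h
  rw [lpNorm_le_mul_lpNorm_iff (by linarith), mul_comm]
  refine h.trans_eq ?_
  congr 2
  field_simp

end InverseHeat

section NoiseKernel

variable {n : ℕ} {a : ℝ}

lemma one_add_mul_sgn_mul_sgn_pos (ha : |a| < 1) (b c : Bool) : 0 < 1 + a * (sgn b * sgn c) := by
  have h := abs_lt.1 ha
  cases b <;> cases c <;> simp only [sgn] <;> norm_num <;> linarith

lemma noiseKernel_nonneg (ha : |a| < 1) (x y : Fin n → Bool) : 0 ≤ noiseKernel a x y :=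
  Finset.prod_nonneg fun i _ =>
    div_nonneg (one_add_mul_sgn_mul_sgn_pos ha (x i) (y i)).le zero_le_two

lemma noiseKernel_comm (a : ℝ) (x y : Fin n → Bool) : noiseKernel a x y = noiseKernel a y x := by
  simp only [noiseKernel, mul_comm (sgn (x _))]

lemma sum_noiseKernel (a : ℝ) (x : Fin n → Bool) : ∑ y, noiseKernel a x y = 1 := by
  unfold noiseKernel
  rw [← Fintype.prod_sum fun (i : Fin n) (b : Bool) => (1 + a * (sgn (x i) * sgn b)) / 2]
  refine Finset.prod_eq_one fun i _ => ?_
  simp only [Fintype.sum_bool, sgn, if_true, Bool.false_eq_true, if_false]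
  ring

lemma sum_rpow_sum_noiseKernel_mul_le (ha : |a| < 1) {t : ℝ} (ht : 1 ≤ t)
    {g : (Fin n → Bool) → ℝ} (hg : ∀ y, 0 ≤ g y) :
    ∑ x, (∑ y, noiseKernel a x y * g y) ^ t ≤ ∑ y, g y ^ t := by
  calc ∑ x, (∑ y, noiseKernel a x y * g y) ^ t
      ≤ ∑ x, ∑ y, noiseKernel a x y * g y ^ t := Finset.sum_le_sum fun x _ =>
        Real.rpow_arith_mean_le_arith_mean_rpow _ _ _ (fun y _ => noiseKernel_nonneg ha x y)
          (sum_noiseKernel a x) (fun y _ => hg y) ht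
    _ = ∑ y, g y ^ t := by
        rw [Finset.sum_comm]
        refine Finset.sum_congr rfl fun y _ => ?_
        rw [← Finset.sum_mul, Finset.sum_congr rfl fun x _ => noiseKernel_comm a x y,
          sum_noiseKernel, one_mul]

/-- The score of the noise kernel, `∂_i K / K` for `K = noiseKernel a · y`; under the law
`noiseKernel a x` its coordinates are independent and centred. -/
def noiseScore (a : ℝ) (x y : Fin n → Bool) (i : Fin n) : ℝ :=
  a * (sgn (x i) * sgn (y i)) / (1 + a * (sgn (x i) * sgn (y i)))

lemma pderiv_noiseKernel (ha : |a| < 1) (x y : Fin n → Bool) (i : Fin n) :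
    (2 : ℝ)⁻¹ * (noiseKernel a x y - noiseKernel a (flipAt i x) y) =
      noiseKernel a x y * noiseScore a x y i := by
  have hself : sgn (flipAt i x i) = -sgn (x i) := by
    rw [flipAt, Function.update_self, sgn_not]
  have hrest : ∏ j ∈ Finset.univ.erase i, (1 + a * (sgn (flipAt i x j) * sgn (y j))) / 2 =
      ∏ j ∈ Finset.univ.erase i, (1 + a * (sgn (x j) * sgn (y j))) / 2 :=
    Finset.prod_congr rfl fun j hj => by
      rw [flipAt, Function.update_of_ne (Finset.ne_of_mem_erase hj)]
  have hne := (one_add_mul_sgn_mul_sgn_pos ha (x i) (y i)).ne'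
  unfold noiseKernel noiseScore
  rw [← Finset.mul_prod_erase _ _ (Finset.mem_univ i),
    ← Finset.mul_prod_erase _ _ (Finset.mem_univ i), hrest, hself, neg_mul]
  generalize sgn (x i) * sgn (y i) = u at hne ⊢
  field_simp
  ring

lemma pderiv_noise (ha : |a| < 1) (f : (Fin n → Bool) → X) (i : Fin n) (x : Fin n → Bool) :
    pderiv i (noise (a : ℂ) f) x = ∑ y, (noiseKernel a x y * noiseScore a x y i) • f y := by
  simp only [pderiv_eq_smul_sub_flipAt, noise_ofReal_apply, ← Finset.sum_sub_distrib, ← sub_smul,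
    Finset.smul_sum, smul_smul, pderiv_noiseKernel ha]

end NoiseKernel

section ScoreMoments

variable {n : ℕ} {a q : ℝ}

lemma exp_le_one_add_add_sq {x : ℝ} (hx : |x| ≤ 1) : Real.exp x ≤ 1 + x + x ^ 2 := by
  linarith [(abs_le.1 (Real.abs_exp_sub_one_sub_id_le hx)).2]

lemma sum_mul_exp_mul_score_le (ha0 : 0 ≤ a) (ha1 : a < 1) (b : Bool) {t : ℝ}
    (ht : |t| ≤ 1 - a) :
    ∑ c, (1 + a * (sgn b * sgn c)) / 2 *
      Real.exp (t * (a * (sgn b * sgn c) / (1 + a * (sgn b * sgn c)))) ≤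
        Real.exp (t ^ 2 / (1 - a)) := by
  have hsub : 0 < 1 - a := sub_pos.2 ha1
  have hta : |t| * a ≤ 1 - a := (mul_le_of_le_one_right (abs_nonneg t) ha1.le).trans ht
  have hplus : |t * (a / (1 + a))| ≤ 1 := by
    rw [abs_mul, abs_of_nonneg (by positivity : 0 ≤ a / (1 + a)), ← mul_div_assoc,
      div_le_one (by positivity)]
    linarith
  have hminus : |-(t * (a / (1 - a)))| ≤ 1 := by
    rw [abs_neg, abs_mul, abs_of_nonneg (div_nonneg ha0 hsub.le), ← mul_div_assoc,
      div_le_one hsub]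
    exact hta
  calc _ = (1 + a) / 2 * Real.exp (t * (a / (1 + a))) +
        (1 - a) / 2 * Real.exp (-(t * (a / (1 - a)))) := by
        cases b <;> simp [sgn, neg_div, sub_eq_add_neg, add_comm]
    _ ≤ (1 + a) / 2 * (1 + t * (a / (1 + a)) + (t * (a / (1 + a))) ^ 2) +
        (1 - a) / 2 * (1 + -(t * (a / (1 - a))) + (-(t * (a / (1 - a)))) ^ 2) := by
        gcongr
        · exact exp_le_one_add_add_sq hplus
        · exact exp_le_one_add_add_sq hminus
    _ = 1 + t ^ 2 / (1 - a) * (a ^ 2 / (1 + a)) := by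
        field_simp
        ring
    _ ≤ 1 + t ^ 2 / (1 - a) := by
        gcongr
        refine mul_le_of_le_one_right (by positivity) ?_
        rw [div_le_one (by positivity)]
        nlinarith
    _ ≤ Real.exp (t ^ 2 / (1 - a)) := by
        rw [add_comm]
        exact Real.add_one_le_exp _

lemma sum_noiseKernel_mul_exp_le (ha0 : 0 ≤ a) (ha1 : a < 1) (x : Fin n → Bool) {t : Fin n → ℝ}
    (ht : ∀ i, |t i| ≤ 1 - a) :
    ∑ y, noiseKernel a x y * Real.exp (∑ i, t i * noiseScore a x y i) ≤
      Real.exp ((∑ i, t i ^ 2) / (1 - a)) := by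
  have ha : |a| < 1 := by rwa [abs_of_nonneg ha0]
  simp only [noiseKernel, noiseScore, Real.exp_sum, ← Finset.prod_mul_distrib, Finset.sum_div]
  rw [← Fintype.prod_sum fun (i : Fin n) (c : Bool) => (1 + a * (sgn (x i) * sgn c)) / 2 *
    Real.exp (t i * (a * (sgn (x i) * sgn c) / (1 + a * (sgn (x i) * sgn c))))]
  refine Finset.prod_le_prod (fun i _ => Finset.sum_nonneg fun c _ => ?_)
    fun i _ => sum_mul_exp_mul_score_le ha0 ha1 (x i) (ht i)
  have := one_add_mul_sgn_mul_sgn_pos ha (x i) c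
  positivity

lemma sum_noiseKernel_mul_cosh_sub_one_le (ha0 : 0 ≤ a) (ha1 : a < 1) (x : Fin n → Bool)
    {c : Fin n → ℝ} (hc : ∑ i, c i ^ 2 ≤ 1) :
    ∑ y, noiseKernel a x y * (Real.cosh ((1 - a) * ∑ i, c i * noiseScore a x y i) - 1) ≤
      2 * (1 - a) := by
  have hsub : 0 < 1 - a := sub_pos.2 ha1
  have hci (i : Fin n) : |c i| ≤ 1 := sq_le_one_iff_abs_le_one _ |>.1 <|
    (Finset.single_le_sum (fun i _ => sq_nonneg (c i)) (Finset.mem_univ i)).trans hc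
  have hexp : Real.exp (1 - a) ≤ 1 + 2 * (1 - a) := by
    have := exp_le_one_add_add_sq (x := 1 - a) (by rw [abs_of_pos hsub]; linarith)
    nlinarith
  have hmoment {ε : ℝ} (hε : |ε| = 1) :
      ∑ y, noiseKernel a x y * Real.exp (ε * ((1 - a) * ∑ i, c i * noiseScore a x y i)) ≤
        1 + 2 * (1 - a) := by
    have ht (i : Fin n) : |ε * (1 - a) * c i| ≤ 1 - a := by
      rw [abs_mul, abs_mul, hε, one_mul, abs_of_pos hsub]
      exact mul_le_of_le_one_right hsub.le (hci i)
    have h := sum_noiseKernel_mul_exp_le ha0 ha1 x ht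
    simp only [mul_assoc _ (c _), ← Finset.mul_sum, mul_pow, ← sq_abs ε, hε, one_pow, one_mul] at h
    simp only [mul_assoc] at h
    refine h.trans (le_trans (Real.exp_le_exp.2 ?_) hexp)
    rw [div_le_iff₀ hsub, ← sq]
    exact mul_le_of_le_one_right (sq_nonneg _) hc
  have hpos := hmoment abs_one
  have hneg := hmoment (ε := -1) (by rw [abs_neg, abs_one])
  simp only [one_mul, neg_one_mul] at hpos hneg
  simp only [Real.cosh_eq, mul_sub, mul_div_assoc', mul_add, ← Finset.sum_div, mul_one,
    Finset.sum_sub_distrib, Finset.sum_add_distrib, sum_noiseKernel]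
  linarith

lemma pow_le_factorial_mul_cosh_sub_one {m : ℕ} (hm : 2 ≤ m) {y : ℝ} (hy : 0 ≤ y) :
    y ^ m ≤ 2 * m.factorial * (Real.cosh y - 1) := by
  have hpartial : 1 + y + y ^ m / m.factorial ≤ Real.exp y := by
    refine le_trans ?_ (Real.sum_le_exp_of_nonneg hy (m + 1))
    rw [Finset.sum_range_succ]
    gcongr
    calc 1 + y = ∑ i ∈ Finset.range 2, y ^ i / (i.factorial : ℝ) := by simp [Finset.sum_range_succ]
      _ ≤ _ := Finset.sum_le_sum_of_subset_of_nonneg (Finset.range_mono hm)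
          fun i _ _ => by positivity
  have hquot : y ^ m / m.factorial ≤ 2 * (Real.cosh y - 1) := by
    rw [Real.cosh_eq]
    linarith [Real.add_one_le_exp (-y)]
  rw [div_le_iff₀' (by positivity)] at hquot
  linarith

lemma rpow_le_sq_add_pow_ceil (hq : 2 ≤ q) {y : ℝ} (hy : 0 ≤ y) : y ^ q ≤ y ^ 2 + y ^ ⌈q⌉₊ := by
  rcases le_total y 1 with h | h
  · refine le_add_of_le_of_nonneg ?_ (pow_nonneg hy _)
    rw [← Real.rpow_two]
    exact Real.rpow_le_rpow_of_exponent_ge_of_imp hy h hq (by intros; linarith)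
  · refine le_add_of_nonneg_of_le (sq_nonneg y) ?_
    rw [← Real.rpow_natCast]
    exact Real.rpow_le_rpow_of_exponent_le h (Nat.le_ceil q)

lemma abs_rpow_le_mul_cosh_sub_one (hq : 2 ≤ q) (x : ℝ) :
    |x| ^ q ≤ 2 * (2 + ⌈q⌉₊.factorial) * (Real.cosh x - 1) := by
  have hceil : 2 ≤ ⌈q⌉₊ := by exact_mod_cast hq.trans (Nat.le_ceil q)
  have h2 := pow_le_factorial_mul_cosh_sub_one le_rfl (abs_nonneg x)
  have hm := pow_le_factorial_mul_cosh_sub_one hceil (abs_nonneg x)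
  rw [Nat.factorial_two, Nat.cast_two] at h2
  rw [← Real.cosh_abs x]
  linarith [rpow_le_sq_add_pow_ceil hq (abs_nonneg x)]

lemma sum_noiseKernel_mul_abs_rpow_le (hq : 2 ≤ q) (ha0 : 0 ≤ a) (ha1 : a < 1)
    (x : Fin n → Bool) {c : Fin n → ℝ} (hc : ∑ i, c i ^ 2 ≤ 1) :
    ∑ y, noiseKernel a x y * |∑ i, c i * noiseScore a x y i| ^ q ≤
      4 * (2 + ⌈q⌉₊.factorial) * (1 - a) ^ (1 - q) := by
  have ha : |a| < 1 := by rwa [abs_of_nonneg ha0]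
  have hsub : 0 < 1 - a := sub_pos.2 ha1
  have hscaled : ∑ y, noiseKernel a x y * |(1 - a) * ∑ i, c i * noiseScore a x y i| ^ q ≤
      2 * (2 + ⌈q⌉₊.factorial) * (2 * (1 - a)) := by
    refine le_trans (Finset.sum_le_sum fun y _ => mul_le_mul_of_nonneg_left
      (abs_rpow_le_mul_cosh_sub_one hq _) (noiseKernel_nonneg ha x y)) ?_
    simp only [mul_left_comm (noiseKernel a x _), ← Finset.mul_sum]
    gcongr
    exact sum_noiseKernel_mul_cosh_sub_one_le ha0 ha1 x hc
  simp only [abs_mul, abs_of_pos hsub, Real.mul_rpow hsub.le (abs_nonneg _),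
    mul_left_comm (noiseKernel a x _), ← Finset.mul_sum] at hscaled
  rw [Real.rpow_sub hsub, Real.rpow_one, ← mul_div_assoc,
    le_div_iff₀' (Real.rpow_pos_of_pos hsub q)]
  linarith

lemma norm_rpow_le_mul_add_abs_rpow (hq : 0 ≤ q) (z : ℂ) :
    ‖z‖ ^ q ≤ 2 ^ q * (|z.re| ^ q + |z.im| ^ q) := by
  have hnorm : ‖z‖ ≤ 2 * max |z.re| |z.im| := by
    linarith [Complex.norm_le_abs_re_add_abs_im z, le_max_left |z.re| |z.im|,
      le_max_right |z.re| |z.im|]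
  refine (Real.rpow_le_rpow (norm_nonneg z) hnorm hq).trans ?_
  rw [Real.mul_rpow zero_le_two (by positivity)]
  gcongr
  rcases le_total |z.re| |z.im| with h | h
  · rw [max_eq_right h]
    exact le_add_of_nonneg_left (by positivity)
  · rw [max_eq_left h]
    exact le_add_of_nonneg_right (by positivity)

lemma sum_noiseKernel_mul_norm_rpow_le (hq : 2 ≤ q) (ha0 : 0 ≤ a) (ha1 : a < 1)
    (x : Fin n → Bool) {c : Fin n → ℂ} (hc : ∑ i, ‖c i‖ ^ 2 ≤ 1) :
    ∑ y, noiseKernel a x y * ‖∑ i, c i * noiseScore a x y i‖ ^ q ≤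
      2 ^ (q + 3) * (2 + ⌈q⌉₊.factorial) * (1 - a) ^ (1 - q) := by
  have ha : |a| < 1 := by rwa [abs_of_nonneg ha0]
  have hre := sum_noiseKernel_mul_abs_rpow_le hq ha0 ha1 x (c := fun i => (c i).re) <|
    (Finset.sum_le_sum fun i _ => sq_le_sq' (neg_le_of_abs_le (Complex.abs_re_le_norm _))
      (Complex.re_le_norm _)).trans hc
  have him := sum_noiseKernel_mul_abs_rpow_le hq ha0 ha1 x (c := fun i => (c i).im) <|
    (Finset.sum_le_sum fun i _ => sq_le_sq' (neg_le_of_abs_le (Complex.abs_im_le_norm _))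
      (le_of_abs_le (Complex.abs_im_le_norm _))).trans hc
  have hpow : (2 : ℝ) ^ (q + 3) = 2 ^ q * 8 := by
    rw [Real.rpow_add two_pos]
    norm_num
  refine le_trans (Finset.sum_le_sum fun y _ => mul_le_mul_of_nonneg_left
    (norm_rpow_le_mul_add_abs_rpow (by linarith) _) (noiseKernel_nonneg ha x y)) ?_
  simp only [Complex.re_sum, Complex.im_sum, Complex.re_mul_ofReal, Complex.im_mul_ofReal,
    mul_left_comm (noiseKernel a x _), ← Finset.mul_sum, mul_add, Finset.sum_add_distrib]
  rw [hpow]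
  have h2q : (0 : ℝ) < 2 ^ q := by positivity
  nlinarith

end ScoreMoments

section GradientNoise

variable {n : ℕ} {a p q r : ℝ}

lemma sum_mul_mul_le_rpow_mul_rpow {ι : Type*} (s : Finset ι) (hrq : r.HolderConjugate q)
    {w f g : ι → ℝ} (hw : ∀ i ∈ s, 0 ≤ w i) (hf : ∀ i ∈ s, 0 ≤ f i) (hg : ∀ i ∈ s, 0 ≤ g i) :
    ∑ i ∈ s, w i * (f i * g i) ≤
      (∑ i ∈ s, w i * f i ^ r) ^ (1 / r) * (∑ i ∈ s, w i * g i ^ q) ^ (1 / q) := by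
  have hsplit {i : ι} (hi : i ∈ s) : w i ^ (1 / r) * w i ^ (1 / q) = w i := by
    rw [← Real.rpow_add_of_nonneg (hw i hi) hrq.one_div_nonneg hrq.symm.one_div_nonneg,
      one_div, one_div, hrq.inv_add_inv_eq_one, Real.rpow_one]
  have hrpow {t : ℝ} (ht : t ≠ 0) {h : ι → ℝ} (hh : ∀ i ∈ s, 0 ≤ h i) :
      ∑ i ∈ s, (w i ^ (1 / t) * h i) ^ t = ∑ i ∈ s, w i * h i ^ t :=
    Finset.sum_congr rfl fun i hi => by
      rw [Real.mul_rpow (Real.rpow_nonneg (hw i hi) _) (hh i hi), ← Real.rpow_mul (hw i hi),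
        one_div_mul_cancel ht, Real.rpow_one]
  rw [← hrpow hrq.ne_zero hf, ← hrpow hrq.symm.ne_zero hg]
  refine le_trans (Finset.sum_le_sum fun i hi => ?_) (Real.inner_le_Lp_mul_Lq_of_nonneg s hrq
    (fun i hi => mul_nonneg (Real.rpow_nonneg (hw i hi) _) (hf i hi))
    (fun i hi => mul_nonneg (Real.rpow_nonneg (hw i hi) _) (hg i hi)))
  rw [mul_mul_mul_comm, hsplit hi]

lemma exists_sum_mul_eq_sqrt_sum_norm_sq {ι : Type*} [Fintype ι] (v : ι → ℂ) :
    ∃ c : ι → ℂ, ∑ i, ‖c i‖ ^ 2 ≤ 1 ∧ ∑ i, c i * v i = (√(∑ i, ‖v i‖ ^ 2) : ℝ) := by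
  set N := √(∑ i, ‖v i‖ ^ 2)
  have hNsq : ∑ i, ‖v i‖ ^ 2 = N ^ 2 := (Real.sq_sqrt (by positivity)).symm
  refine ⟨fun i => starRingEnd ℂ (v i) / N, ?_, ?_⟩
  · simp only [norm_div, RCLike.norm_conj, Complex.norm_real, div_pow, ← Finset.sum_div, hNsq,
      Real.norm_eq_abs, sq_abs]
    exact div_self_le_one _
  · simp only [div_mul_eq_mul_div, Complex.conj_mul', ← Finset.sum_div]
    norm_cast
    rw [hNsq, sq, mul_self_div_self]

lemma sqrt_sum_norm_pderiv_noise_sq_le (hrq : r.HolderConjugate q) (hq : 2 ≤ q) (ha0 : 0 ≤ a)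
    (ha1 : a < 1) (f : (Fin n → Bool) → ℂ) (x : Fin n → Bool) :
    √(∑ i, ‖pderiv i (noise (a : ℂ) f) x‖ ^ 2) ≤
      (∑ y, noiseKernel a x y * ‖f y‖ ^ r) ^ (1 / r) *
        ((2 ^ (q + 3) * (2 + ⌈q⌉₊.factorial)) ^ (1 / q) * (1 - a) ^ (-(1 / r))) := by
  have ha : |a| < 1 := by rwa [abs_of_nonneg ha0]
  have hsub : 0 < 1 - a := sub_pos.2 ha1
  have hK := noiseKernel_nonneg ha x
  obtain ⟨c, hc, hsum⟩ := exists_sum_mul_eq_sqrt_sum_norm_sq fun i => pderiv i (noise (a : ℂ) f) x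
  set S : (Fin n → Bool) → ℂ := fun y => ∑ i, c i * noiseScore a x y i with hS
  have hdual : ∑ i, c i * pderiv i (noise (a : ℂ) f) x = ∑ y, noiseKernel a x y • (f y * S y) := by
    simp only [pderiv_noise ha, hS, Finset.mul_sum, Finset.smul_sum, Complex.real_smul,
      Complex.ofReal_mul]
    rw [Finset.sum_comm]
    exact Finset.sum_congr rfl fun y _ => Finset.sum_congr rfl fun i _ => by ring
  calc √(∑ i, ‖pderiv i (noise (a : ℂ) f) x‖ ^ 2)
      = ‖∑ y, noiseKernel a x y • (f y * S y)‖ := by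
        rw [← hdual, hsum, Complex.norm_real, Real.norm_of_nonneg (Real.sqrt_nonneg _)]
    _ ≤ ∑ y, noiseKernel a x y * (‖f y‖ * ‖S y‖) := by
        refine (norm_sum_le _ _).trans_eq (Finset.sum_congr rfl fun y _ => ?_)
        rw [norm_smul, norm_mul, Real.norm_of_nonneg (hK y)]
    _ ≤ (∑ y, noiseKernel a x y * ‖f y‖ ^ r) ^ (1 / r) *
        (∑ y, noiseKernel a x y * ‖S y‖ ^ q) ^ (1 / q) :=
        sum_mul_mul_le_rpow_mul_rpow _ hrq (fun y _ => hK y) (fun y _ => norm_nonneg _)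
          (fun y _ => norm_nonneg _)
    _ ≤ _ := by
        have hexp : (1 - q) * (1 / q) = -(1 / r) := by
          rw [sub_mul, mul_one_div_cancel hrq.symm.ne_zero, one_mul, one_div, one_div]
          linarith [hrq.inv_add_inv_eq_one]
        rw [← hexp, Real.rpow_mul hsub.le, ← Real.mul_rpow (by positivity) (by positivity)]
        refine mul_le_mul_of_nonneg_left (Real.rpow_le_rpow ?_
          (sum_noiseKernel_mul_norm_rpow_le hq ha0 ha1 x hc) hrq.symm.one_div_nonneg)
          (Real.rpow_nonneg (Finset.sum_nonneg fun y _ => mul_nonneg (hK y) (by positivity)) _)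
        exact Finset.sum_nonneg fun y _ => mul_nonneg (hK y) (by positivity)

lemma gradLpNorm_noise_le (hrq : r.HolderConjugate q) (hq : 2 ≤ q) (hrp : r ≤ p) (ha0 : 0 ≤ a)
    (ha1 : a < 1) (f : (Fin n → Bool) → ℂ) :
    gradLpNorm p (noise (a : ℂ) f) ≤
      (2 ^ (q + 3) * (2 + ⌈q⌉₊.factorial)) ^ (1 / q) * (1 - a) ^ (-(1 / r)) * lpNorm p f := by
  have ha : |a| < 1 := by rwa [abs_of_nonneg ha0]
  have hp : 0 < p := hrq.pos.trans_le hrp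
  set T := (2 ^ (q + 3) * (2 + ⌈q⌉₊.factorial)) ^ (1 / q) * (1 - a) ^ (-(1 / r))
  have hT0 : 0 ≤ T := by positivity
  have hpt (x : Fin n → Bool) : ‖√(∑ i, ‖pderiv i (noise (a : ℂ) f) x‖ ^ 2)‖ ^ p ≤
      T ^ p * (∑ y, noiseKernel a x y * ‖f y‖ ^ r) ^ (p / r) := by
    have hF : 0 ≤ ∑ y, noiseKernel a x y * ‖f y‖ ^ r :=
      Finset.sum_nonneg fun y _ => mul_nonneg (noiseKernel_nonneg ha x y) (by positivity)
    rw [Real.norm_of_nonneg (Real.sqrt_nonneg _), div_eq_inv_mul, ← one_div, Real.rpow_mul hF,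
      ← Real.mul_rpow hT0 (by positivity), mul_comm T]
    exact Real.rpow_le_rpow (Real.sqrt_nonneg _)
      (sqrt_sum_norm_pderiv_noise_sq_le hrq hq ha0 ha1 f x) hp.le
  have hsum : ∑ x, ‖√(∑ i, ‖pderiv i (noise (a : ℂ) f) x‖ ^ 2)‖ ^ p ≤
      T ^ p * ∑ y, ‖f y‖ ^ p := by
    refine (Finset.sum_le_sum fun x _ => hpt x).trans ?_
    rw [← Finset.mul_sum]
    refine mul_le_mul_of_nonneg_left ?_ (by positivity)
    refine (sum_rpow_sum_noiseKernel_mul_le ha ((one_le_div hrq.pos).2 hrp)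
      (g := fun y => ‖f y‖ ^ r)
      fun y => by positivity).trans_eq ?_
    simp only [← Real.rpow_mul (norm_nonneg _), mul_div_cancel₀ p hrq.ne_zero]
  calc gradLpNorm p (noise (a : ℂ) f)
      ≤ (T ^ p * ((2 ^ n : ℝ)⁻¹ * ∑ y, ‖f y‖ ^ p)) ^ (1 / p) := by
        rw [mul_left_comm]
        unfold gradLpNorm lpNorm
        gcongr
    _ = T * lpNorm p f := by
        rw [Real.mul_rpow (by positivity) (by positivity), ← Real.rpow_mul hT0,
          mul_one_div_cancel hp.ne', Real.rpow_one, lpNorm]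

end GradientNoise

section BernsteinMarkov

variable {n d : ℕ} {p r α L : ℝ}

lemma half_le_one_sub_exp_neg {s : ℝ} (hs0 : 0 ≤ s) (hs1 : s ≤ 1) :
    s / 2 ≤ 1 - Real.exp (-s) := by
  have hexp : Real.exp (-s) ≤ (1 + s)⁻¹ := by
    rw [Real.exp_neg, add_comm]
    exact inv_anti₀ (by linarith) (Real.add_one_le_exp s)
  calc s / 2 ≤ s / (1 + s) := by gcongr; linarith
    _ = 1 - (1 + s)⁻¹ := by
        field_simp
        ring
    _ ≤ 1 - Real.exp (-s) := by gcongr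

lemma noise_exp_neg_noise_exp (s : ℝ) (f : (Fin n → Bool) → X) :
    noise (Real.exp (-s) : ℝ) (noise (Real.exp s : ℝ) f) = f := by
  rw [noise_noise, ← Complex.ofReal_mul, ← Real.exp_add, neg_add_cancel, Real.exp_zero,
    Complex.ofReal_one, noise_one]

/- Run the heat flow backwards for time `s = d⁻ᵅ`, at a bounded cost because `f` has degree at most
`d`, and then forwards for the same time, which costs `(1 - e⁻ˢ) ^ (-1/r) ≲ d ^ (α/r)` for the
gradient. -/
theorem gradLpNorm_le_mul_rpow_mul_lpNorm {q : ℝ} (hrq : r.HolderConjugate q) (hq : 2 ≤ q)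
    (hrp : r ≤ p) (hL : |p - 2| * Real.pi / (2 * √(p - 1)) ≤ L) (hL1 : 1 ≤ L)
    (hα : Real.pi - α * Real.pi / 2 = Real.arcsin (2 * √(p - 1) / p)) (hd : 1 ≤ d)
    {f : (Fin n → Bool) → ℂ} (hf : degLE f d) :
    gradLpNorm p f ≤ (2 ^ (q + 3) * (2 + ⌈q⌉₊.factorial)) ^ (1 / q) * 2 ^ (1 / r) *
      Real.exp (2 * (1 + L)) * (d : ℝ) ^ (α / r) * lpNorm p f := by
  have hd1 : (1 : ℝ) ≤ d := by exact_mod_cast hd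
  have hp : 1 < p := hrq.lt.trans_le hrp
  set B := (2 ^ (q + 3) * (2 + (⌈q⌉₊.factorial : ℝ))) ^ (1 / q)
  set s : ℝ := (d : ℝ)⁻¹ ^ α with hs
  have hs0 : 0 < s := by positivity
  have hs1 : s ≤ 1 := Real.rpow_le_one (by positivity) (inv_le_one_of_one_le₀ hd1)
    (pos_of_pi_sub_mul_pi_div_two_eq_arcsin hα).le
  have hsmall : (1 - Real.exp (-s)) ^ (-(1 / r)) ≤ 2 ^ (1 / r) * (d : ℝ) ^ (α / r) := by
    calc (1 - Real.exp (-s)) ^ (-(1 / r)) ≤ (s / 2) ^ (-(1 / r)) :=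
          Real.rpow_le_rpow_of_nonpos (by positivity) (half_le_one_sub_exp_neg hs0.le hs1)
            (neg_nonpos.2 hrq.one_div_nonneg)
      _ = 2 ^ (1 / r) * (d : ℝ) ^ (α / r) := by
          rw [Real.rpow_neg (by positivity), ← Real.inv_rpow (by positivity), inv_div, hs,
            Real.inv_rpow (by positivity), div_inv_eq_mul,
            Real.mul_rpow zero_le_two (by positivity), ← Real.rpow_mul (by positivity),
            mul_one_div]
  calc gradLpNorm p f
      = gradLpNorm p (noise (Real.exp (-s) : ℝ) (noise (Real.exp s : ℝ) f)) := by
        rw [noise_exp_neg_noise_exp]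
    _ ≤ B * (1 - Real.exp (-s)) ^ (-(1 / r)) * lpNorm p (noise (Real.exp s : ℝ) f) :=
        gradLpNorm_noise_le hrq hq hrp (Real.exp_nonneg _)
          (Real.exp_lt_one_iff.2 (neg_lt_zero.2 hs0)) _
    _ ≤ B * (2 ^ (1 / r) * (d : ℝ) ^ (α / r)) * (Real.exp (2 * (1 + L)) * lpNorm p f) := by
        gcongr
        · exact lpNorm_nonneg p _
        · exact lpNorm_noise_exp_rpow_le hp hL hL1 hα hd hf
    _ = _ := by ring

theorem exists_gradLpNorm_le_mul_rpow_mul_lpNorm (hr1 : 1 < r) (hr2 : r ≤ 2) (hrp : r ≤ p)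
    (hα : Real.pi - α * Real.pi / 2 = Real.arcsin (2 * √(p - 1) / p)) :
    ∃ C : ℝ, 0 < C ∧ ∀ n d : ℕ, 1 ≤ d → ∀ f : (Fin n → Bool) → ℂ, degLE f d →
      gradLpNorm p f ≤ C * (d : ℝ) ^ (α / r) * lpNorm p f := by
  have hrq := Real.HolderConjugate.conjExponent hr1
  have hq : 2 ≤ r.conjExponent := by
    rw [Real.conjExponent, le_div_iff₀ (sub_pos.2 hr1)]
    linarith
  exact ⟨_, by positivity, fun n d hd f hf => gradLpNorm_le_mul_rpow_mul_lpNorm hrq hq hrp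
    (le_max_right 1 _) (le_max_left 1 _) hα hd hf⟩

lemma one_le_two_mul_log_natCast_add_one (hd : 1 ≤ d) : 1 ≤ 2 * Real.log (d + 1) := by
  have hd2 : (2 : ℝ) ≤ d + 1 := by exact_mod_cast Nat.succ_le_succ hd
  linarith [Real.log_two_gt_d9, Real.log_le_log two_pos hd2]

theorem stmt14_general (p : ℝ) (hp1 : 1 < p) (θ : ℝ)
    (hθ : θ = 2 * Real.arcsin (2 * Real.sqrt (p - 1) / p)) :
    ∃ C : ℝ, 0 < C ∧ ∀ n d : ℕ, 1 ≤ d → ∀ f : (Fin n → Bool) → ℂ, degLE f d →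
      (p < 2 →
        gradLpNorm p f ≤ C * (d : ℝ) ^ (2 / p - θ / (p * Real.pi)) * lpNorm p f) ∧
      (2 ≤ p →
        gradLpNorm p f ≤ C * (d : ℝ) ^ (1 - θ / (2 * Real.pi)) * lpNorm p f) := by
  have hpi := Real.pi_ne_zero
  have hα : Real.pi - (2 - θ / Real.pi) * Real.pi / 2 = Real.arcsin (2 * √(p - 1) / p) := by
    rw [hθ]
    field_simp
    ring
  rcases lt_or_ge p 2 with hp2 | hp2
  · obtain ⟨C, hC, h⟩ := exists_gradLpNorm_le_mul_rpow_mul_lpNorm hp1 hp2.le le_rfl hα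
    have hexp : (2 - θ / Real.pi) / p = 2 / p - θ / (p * Real.pi) := by field_simp
    exact ⟨C, hC, fun n d hd f hf => ⟨fun _ => hexp ▸ h n d hd f hf, fun h2 => by linarith⟩⟩
  · obtain ⟨C, hC, h⟩ := exists_gradLpNorm_le_mul_rpow_mul_lpNorm one_lt_two le_rfl hp2 hα
    have hexp : (2 - θ / Real.pi) / 2 = 1 - θ / (2 * Real.pi) := by field_simp
    exact ⟨C, hC, fun n d hd f hf => ⟨fun h2 => by linarith, fun _ => hexp ▸ h n d hd f hf⟩⟩

end BernsteinMarkov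

/-- **Bernstein–Markov inequality for the scalar discrete gradient.** -/
theorem stmt14 (p : ℝ) (hp1 : 1 < p) (θ : ℝ)
    (hθ : θ = 2 * Real.arcsin (2 * Real.sqrt (p - 1) / p)) :
    ∃ C : ℝ, 0 < C ∧
      ∀ n d : ℕ, 1 ≤ d → d ≤ n → ∀ f : (Fin n → Bool) → ℂ, degLE f d →
        (p < 2 →
          gradLpNorm p f ≤
            C * (d : ℝ) ^ (2 / p - θ / (p * Real.pi)) * Real.log (d + 1) * lpNorm p f) ∧
        (2 ≤ p →
          gradLpNorm p f ≤ C * (d : ℝ) ^ (1 - θ / (2 * Real.pi)) * lpNorm p f) := by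
  obtain ⟨C, hC, h⟩ := stmt14_general p hp1 θ hθ
  refine ⟨2 * C, by positivity, fun n d hd _ f hf =>
    ⟨fun hp2 => ((h n d hd f hf).1 hp2).trans ?_, fun hp2 => ((h n d hd f hf).2 hp2).trans ?_⟩⟩
  · have hlog := one_le_two_mul_log_natCast_add_one hd
    rw [mul_assoc 2 C, mul_comm 2, mul_assoc _ 2]
    exact mul_le_mul_of_nonneg_right (le_mul_of_one_le_right (by positivity) hlog)
      (lpNorm_nonneg p f)
  · gcongr
    · exact lpNorm_nonneg p f
    · linarith

end HammingCube
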